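/- Let L > 0 and suppose (u1, u2, v1, v2) are smooth, L-periodic in x, and satisfy the four-component system: ∂ₜm1 + n2 g1 g2 + m1(f2 g2 + 2 f1 g1) = 0, ∂ₜm2 − n1 g1 g2 − m2(f1 g1 + 2 f2 g2) = 0, ∂ₜn1 − m2 f1 f2 − n1(f2 g2 + 2 f1 g1) = 0, ∂ₜn2 + m1 f1 f2 + n2(f1 g1 + 2 f2 g2) = 0. Then the quantity H₁(t) = ∫₀ᴸ (m2 f2 + n1 g1)(x, t) dx is independent of t. -/

import Mathlib

/-!
In terms of `f1`, `f2`, `g1`, `g2` the momenta are `m1 = f2 - ∂ₓg1`, `m2 = f1 + ∂ₓg2`,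
`n1 = g2 + ∂ₓf1` and `n2 = g1 - ∂ₓf2`, so the potentials drop out. Put `S = f1 g1 + f2 g2`. These
relations give both

* `∂ₓS = (m2 f2 + n1 g1) - (m1 f1 + n2 g2)`, and
* `∂ₓ(f1 ∂ₜg1 + g2 ∂ₜf2) = (m2 ∂ₜf2 + n1 ∂ₜg1) - (f1 ∂ₜm1 + g2 ∂ₜn2)`,

while the evolution equations, weighted by `f1`, `f2`, `g1`, `g2`, add up to
`f1 ∂ₜm1 + f2 ∂ₜm2 + g1 ∂ₜn1 + g2 ∂ₜn2 = 2 S ∂ₓS`. Hence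
`∂ₜ(m2 f2 + n1 g1) = ∂ₓ(S² + f1 ∂ₜg1 + g2 ∂ₜf2)`, a conservation law with periodic flux.
-/

/-- Partial derivative with respect to the first (space) variable. -/
noncomputable def pX (f : ℝ × ℝ → ℝ) : ℝ × ℝ → ℝ :=
  fun p => deriv (fun x => f (x, p.2)) p.1

/-- Partial derivative with respect to the second (time) variable. -/
noncomputable def pT (f : ℝ × ℝ → ℝ) : ℝ × ℝ → ℝ :=
  fun p => deriv (fun t => f (p.1, t)) p.2

section PartialDerivatives

variable {f g : ℝ × ℝ → ℝ}

theorem pX_add (hf : Differentiable ℝ f) (hg : Differentiable ℝ g) :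
    pX (f + g) = pX f + pX g :=
  funext fun _ => deriv_fun_add (by fun_prop) (by fun_prop)

theorem pX_sub (hf : Differentiable ℝ f) (hg : Differentiable ℝ g) :
    pX (f - g) = pX f - pX g :=
  funext fun _ => deriv_fun_sub (by fun_prop) (by fun_prop)

theorem pX_mul (hf : Differentiable ℝ f) (hg : Differentiable ℝ g) :
    pX (f * g) = pX f * g + f * pX g :=
  funext fun _ => deriv_fun_mul (by fun_prop) (by fun_prop)

theorem pT_add (hf : Differentiable ℝ f) (hg : Differentiable ℝ g) :
    pT (f + g) = pT f + pT g :=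
  funext fun _ => deriv_fun_add (by fun_prop) (by fun_prop)

theorem pT_sub (hf : Differentiable ℝ f) (hg : Differentiable ℝ g) :
    pT (f - g) = pT f - pT g :=
  funext fun _ => deriv_fun_sub (by fun_prop) (by fun_prop)

theorem pT_mul (hf : Differentiable ℝ f) (hg : Differentiable ℝ g) :
    pT (f * g) = pT f * g + f * pT g :=
  funext fun _ => deriv_fun_mul (by fun_prop) (by fun_prop)

theorem pX_eq_fderiv (hf : Differentiable ℝ f) : pX f = fun p => fderiv ℝ f p (1, 0) := by
  funext p
  have horizontal : HasDerivAt (fun x : ℝ => (x, p.2)) ((1 : ℝ), (0 : ℝ)) p.1 :=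
    (hasDerivAt_id p.1).prodMk (hasDerivAt_const p.1 p.2)
  exact ((hf p).hasFDerivAt.comp_hasDerivAt p.1 horizontal).deriv

theorem pT_eq_fderiv (hf : Differentiable ℝ f) : pT f = fun p => fderiv ℝ f p (0, 1) := by
  funext p
  have vertical : HasDerivAt (fun t : ℝ => (p.1, t)) ((0 : ℝ), (1 : ℝ)) p.2 :=
    (hasDerivAt_const p.2 p.1).prodMk (hasDerivAt_id p.2)
  exact ((hf p).hasFDerivAt.comp_hasDerivAt p.2 vertical).deriv

theorem contDiff_pX {m n : WithTop ℕ∞} (hf : ContDiff ℝ n f) (hmn : m + 1 ≤ n) :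
    ContDiff ℝ m (pX f) := by
  rw [pX_eq_fderiv ((hf.of_le (le_add_self.trans hmn)).differentiable one_ne_zero)]
  exact (hf.fderiv_right hmn).clm_apply contDiff_const

theorem contDiff_pT {m n : WithTop ℕ∞} (hf : ContDiff ℝ n f) (hmn : m + 1 ≤ n) :
    ContDiff ℝ m (pT f) := by
  rw [pT_eq_fderiv ((hf.of_le (le_add_self.trans hmn)).differentiable one_ne_zero)]
  exact (hf.fderiv_right hmn).clm_apply contDiff_const

theorem differentiable_pX (hf : ContDiff ℝ 2 f) : Differentiable ℝ (pX f) :=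
  (contDiff_pX hf one_add_one_eq_two.le).differentiable one_ne_zero

theorem differentiable_pT (hf : ContDiff ℝ 2 f) : Differentiable ℝ (pT f) :=
  (contDiff_pT hf one_add_one_eq_two.le).differentiable one_ne_zero

theorem pX_pT_comm (hf : ContDiff ℝ 2 f) : pX (pT f) = pT (pX f) := by
  have hf_diff : Differentiable ℝ f := hf.differentiable two_ne_zero
  have fderiv_diff : Differentiable ℝ (fderiv ℝ f) :=
    (hf.fderiv_right one_add_one_eq_two.le).differentiable one_ne_zero
  have fderiv_fderiv_apply (p v w : ℝ × ℝ) :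
      fderiv ℝ (fun q => fderiv ℝ f q v) p w = fderiv ℝ (fderiv ℝ f) p w v := by
    simp [fderiv_clm_apply (fderiv_diff p) (differentiableAt_const v)]
  rw [pX_eq_fderiv (differentiable_pT hf), pT_eq_fderiv (differentiable_pX hf),
    pX_eq_fderiv hf_diff, pT_eq_fderiv hf_diff]
  funext p
  simp only [fderiv_fderiv_apply]
  exact hf.contDiffAt.isSymmSndFDerivAt (by simp) _ _

theorem periodic_pX {c : ℝ × ℝ} (hf : Function.Periodic f c) : Function.Periodic (pX f) c := by
  intro p
  have shift := deriv_comp_add_const (fun x => f (x, p.2 + c.2)) c.1 p.1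
  exact shift.symm.trans (congrArg (deriv · p.1) (funext fun x => hf (x, p.2)))

theorem periodic_pT {c : ℝ × ℝ} (hf : Function.Periodic f c) : Function.Periodic (pT f) c := by
  intro p
  have shift := deriv_comp_add_const (fun t => f (p.1 + c.1, t)) c.2 p.2
  exact shift.symm.trans (congrArg (deriv · p.2) (funext fun t => hf (p.1, t)))

end PartialDerivatives

theorem periodic_mk_zero {α : Type*} {L : ℝ} {f : ℝ × ℝ → α}
    (hf : ∀ x t : ℝ, f (x + L, t) = f (x, t)) : Function.Periodic f (L, 0) := by
  rintro ⟨x, t⟩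
  simpa using hf x t

theorem integral_eq_of_pT_eq_pX {h F : ℝ × ℝ → ℝ} (hh : Differentiable ℝ h)
    (hF : Differentiable ℝ F) (conservation : pT h = pX F) {a b : ℝ}
    (hFab : ∀ t, F (a, t) = F (b, t)) (t₁ t₂ : ℝ) :
    ∫ x in a..b, h (x, t₁) = ∫ x in a..b, h (x, t₂) := by
  have divergence_zero (p : ℝ × ℝ) : (-fderiv ℝ F p) (1, 0) + fderiv ℝ h p (0, 1) = 0 := by
    have := congrFun conservation p
    rw [pT_eq_fderiv hh, pX_eq_fderiv hF] at this
    simp [this]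
  have boundary := MeasureTheory.integral2_divergence_prod_of_hasFDerivAt
    (-F) h (fun p => -fderiv ℝ F p) (fderiv ℝ h) a t₁ b t₂
    hF.continuous.neg.continuousOn hh.continuous.continuousOn
    (fun p _ => (hF p).hasFDerivAt.neg) (fun p _ => (hh p).hasFDerivAt)
    (by simp only [divergence_zero, MeasureTheory.integrableOn_zero])
  simp only [divergence_zero, intervalIntegral.integral_zero, Pi.neg_apply, hFab,
    add_sub_cancel_right] at boundary
  exact (sub_eq_zero.mp boundary.symm).symm

/-- The four-component system with the potentials `u1`, `u2`, `v1`, `v2` eliminated: `m1`, `m2`,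
`n1`, `n2` are expressed through `f1`, `f2`, `g1`, `g2`, which are only required to be `C²`. -/
structure IsReducedSolution (m1 m2 n1 n2 f1 f2 g1 g2 : ℝ × ℝ → ℝ) : Prop where
  contDiff_f1 : ContDiff ℝ 2 f1
  contDiff_f2 : ContDiff ℝ 2 f2
  contDiff_g1 : ContDiff ℝ 2 g1
  contDiff_g2 : ContDiff ℝ 2 g2
  m1_eq : m1 = f2 - pX g1
  m2_eq : m2 = f1 + pX g2
  n1_eq : n1 = g2 + pX f1
  n2_eq : n2 = g1 - pX f2
  evolution_m1 : pT m1 + n2 * g1 * g2 + m1 * (f2 * g2 + 2 * f1 * g1) = 0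
  evolution_m2 : pT m2 - n1 * g1 * g2 - m2 * (f1 * g1 + 2 * f2 * g2) = 0
  evolution_n1 : pT n1 - m2 * f1 * f2 - n1 * (f2 * g2 + 2 * f1 * g1) = 0
  evolution_n2 : pT n2 + m1 * f1 * f2 + n2 * (f1 * g1 + 2 * f2 * g2) = 0

namespace IsReducedSolution

variable {m1 m2 n1 n2 f1 f2 g1 g2 : ℝ × ℝ → ℝ}

theorem differentiable_f1 (hs : IsReducedSolution m1 m2 n1 n2 f1 f2 g1 g2) :
    Differentiable ℝ f1 :=
  hs.contDiff_f1.differentiable two_ne_zero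

theorem differentiable_f2 (hs : IsReducedSolution m1 m2 n1 n2 f1 f2 g1 g2) :
    Differentiable ℝ f2 :=
  hs.contDiff_f2.differentiable two_ne_zero

theorem differentiable_g1 (hs : IsReducedSolution m1 m2 n1 n2 f1 f2 g1 g2) :
    Differentiable ℝ g1 :=
  hs.contDiff_g1.differentiable two_ne_zero

theorem differentiable_g2 (hs : IsReducedSolution m1 m2 n1 n2 f1 f2 g1 g2) :
    Differentiable ℝ g2 :=
  hs.contDiff_g2.differentiable two_ne_zero

theorem differentiable_m2 (hs : IsReducedSolution m1 m2 n1 n2 f1 f2 g1 g2) :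
    Differentiable ℝ m2 :=
  hs.m2_eq ▸ hs.differentiable_f1.add (differentiable_pX hs.contDiff_g2)

theorem differentiable_n1 (hs : IsReducedSolution m1 m2 n1 n2 f1 f2 g1 g2) :
    Differentiable ℝ n1 :=
  hs.n1_eq ▸ hs.differentiable_g2.add (differentiable_pX hs.contDiff_f1)

theorem differentiable_pairing (hs : IsReducedSolution m1 m2 n1 n2 f1 f2 g1 g2) :
    Differentiable ℝ (f1 * g1 + f2 * g2) :=
  (hs.differentiable_f1.mul hs.differentiable_g1).add
    (hs.differentiable_f2.mul hs.differentiable_g2)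

theorem differentiable_density (hs : IsReducedSolution m1 m2 n1 n2 f1 f2 g1 g2) :
    Differentiable ℝ (m2 * f2 + n1 * g1) :=
  (hs.differentiable_m2.mul hs.differentiable_f2).add
    (hs.differentiable_n1.mul hs.differentiable_g1)

theorem differentiable_exchange (hs : IsReducedSolution m1 m2 n1 n2 f1 f2 g1 g2) :
    Differentiable ℝ (f1 * pT g1 + g2 * pT f2) :=
  (hs.differentiable_f1.mul (differentiable_pT hs.contDiff_g1)).add
    (hs.differentiable_g2.mul (differentiable_pT hs.contDiff_f2))

theorem pX_pairing (hs : IsReducedSolution m1 m2 n1 n2 f1 f2 g1 g2) :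
    pX (f1 * g1 + f2 * g2) = (m2 * f2 + n1 * g1) - (m1 * f1 + n2 * g2) := by
  rw [pX_add (hs.differentiable_f1.mul hs.differentiable_g1)
      (hs.differentiable_f2.mul hs.differentiable_g2),
    pX_mul hs.differentiable_f1 hs.differentiable_g1,
    pX_mul hs.differentiable_f2 hs.differentiable_g2, hs.m1_eq, hs.m2_eq, hs.n1_eq, hs.n2_eq]
  ring

theorem weighted_evolution (hs : IsReducedSolution m1 m2 n1 n2 f1 f2 g1 g2) :
    f1 * pT m1 + f2 * pT m2 + g1 * pT n1 + g2 * pT n2 =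
      pX ((f1 * g1 + f2 * g2) * (f1 * g1 + f2 * g2)) := by
  rw [pX_mul hs.differentiable_pairing hs.differentiable_pairing, hs.pX_pairing]
  linear_combination f1 * hs.evolution_m1 + f2 * hs.evolution_m2 + g1 * hs.evolution_n1 +
    g2 * hs.evolution_n2

theorem pX_exchange (hs : IsReducedSolution m1 m2 n1 n2 f1 f2 g1 g2) :
    pX (f1 * pT g1 + g2 * pT f2) =
      (m2 * pT f2 + n1 * pT g1) - (f1 * pT m1 + g2 * pT n2) := by
  have pT_f2_diff := differentiable_pT hs.contDiff_f2
  have pT_g1_diff := differentiable_pT hs.contDiff_g1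
  have pT_m1 : pT m1 = pT f2 - pX (pT g1) := by
    rw [hs.m1_eq, pT_sub hs.differentiable_f2 (differentiable_pX hs.contDiff_g1),
      pX_pT_comm hs.contDiff_g1]
  have pT_n2 : pT n2 = pT g1 - pX (pT f2) := by
    rw [hs.n2_eq, pT_sub hs.differentiable_g1 (differentiable_pX hs.contDiff_f2),
      pX_pT_comm hs.contDiff_f2]
  rw [pX_add (hs.differentiable_f1.mul pT_g1_diff) (hs.differentiable_g2.mul pT_f2_diff),
    pX_mul hs.differentiable_f1 pT_g1_diff, pX_mul hs.differentiable_g2 pT_f2_diff,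
    pT_m1, pT_n2, hs.m2_eq, hs.n1_eq]
  ring

theorem pT_density_eq_pX_flux (hs : IsReducedSolution m1 m2 n1 n2 f1 f2 g1 g2) :
    pT (m2 * f2 + n1 * g1) =
      pX ((f1 * g1 + f2 * g2) * (f1 * g1 + f2 * g2) + (f1 * pT g1 + g2 * pT f2)) := by
  rw [pX_add (hs.differentiable_pairing.mul hs.differentiable_pairing) hs.differentiable_exchange,
    ← hs.weighted_evolution, hs.pX_exchange,
    pT_add (hs.differentiable_m2.mul hs.differentiable_f2)
      (hs.differentiable_n1.mul hs.differentiable_g1),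
    pT_mul hs.differentiable_m2 hs.differentiable_f2,
    pT_mul hs.differentiable_n1 hs.differentiable_g1]
  ring

theorem of_potentials {u1 u2 v1 v2 : ℝ × ℝ → ℝ} (hu1 : ContDiff ℝ 3 u1) (hu2 : ContDiff ℝ 3 u2)
    (hv1 : ContDiff ℝ 3 v1) (hv2 : ContDiff ℝ 3 v2)
    (hm1 : m1 = u1 - pX (pX u1)) (hm2 : m2 = u2 - pX (pX u2))
    (hn1 : n1 = v1 - pX (pX v1)) (hn2 : n2 = v2 - pX (pX v2))
    (hf1 : f1 = u2 - pX v1) (hf2 : f2 = u1 + pX v2)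
    (hg1 : g1 = v2 + pX u1) (hg2 : g2 = v1 - pX u2)
    (evolution_m1 : pT m1 + n2 * g1 * g2 + m1 * (f2 * g2 + 2 * f1 * g1) = 0)
    (evolution_m2 : pT m2 - n1 * g1 * g2 - m2 * (f1 * g1 + 2 * f2 * g2) = 0)
    (evolution_n1 : pT n1 - m2 * f1 * f2 - n1 * (f2 * g2 + 2 * f1 * g1) = 0)
    (evolution_n2 : pT n2 + m1 * f1 * f2 + n2 * (f1 * g1 + 2 * f2 * g2) = 0) :
    IsReducedSolution m1 m2 n1 n2 f1 f2 g1 g2 := by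
  have contDiff_two {w : ℝ × ℝ → ℝ} (hw : ContDiff ℝ 3 w) : ContDiff ℝ 2 w :=
    hw.of_le (by norm_num)
  have contDiff_two_pX {w : ℝ × ℝ → ℝ} (hw : ContDiff ℝ 3 w) : ContDiff ℝ 2 (pX w) :=
    contDiff_pX hw two_add_one_eq_three.le
  have diff {w : ℝ × ℝ → ℝ} (hw : ContDiff ℝ 3 w) : Differentiable ℝ w :=
    hw.differentiable three_ne_zero
  have diff_pX {w : ℝ × ℝ → ℝ} (hw : ContDiff ℝ 3 w) : Differentiable ℝ (pX w) :=
    differentiable_pX (contDiff_two hw)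
  refine
    { contDiff_f1 := hf1 ▸ (contDiff_two hu2).sub (contDiff_two_pX hv1)
      contDiff_f2 := hf2 ▸ (contDiff_two hu1).add (contDiff_two_pX hv2)
      contDiff_g1 := hg1 ▸ (contDiff_two hv2).add (contDiff_two_pX hu1)
      contDiff_g2 := hg2 ▸ (contDiff_two hv1).sub (contDiff_two_pX hu2)
      m1_eq := ?_, m2_eq := ?_, n1_eq := ?_, n2_eq := ?_
      evolution_m1, evolution_m2, evolution_n1, evolution_n2 }
  · rw [hm1, hf2, hg1, pX_add (diff hv2) (diff_pX hu1)]; ring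
  · rw [hm2, hf1, hg2, pX_sub (diff hv1) (diff_pX hu2)]; ring
  · rw [hn1, hg2, hf1, pX_sub (diff hu2) (diff_pX hv1)]; ring
  · rw [hn2, hg1, hf2, pX_add (diff hu1) (diff_pX hv2)]; ring

end IsReducedSolution

theorem stmt_15_general {L : ℝ} {m1 m2 n1 n2 f1 f2 g1 g2 : ℝ × ℝ → ℝ}
    (hs : IsReducedSolution m1 m2 n1 n2 f1 f2 g1 g2)
    (hf1 : Function.Periodic f1 (L, 0)) (hf2 : Function.Periodic f2 (L, 0))
    (hg1 : Function.Periodic g1 (L, 0)) (hg2 : Function.Periodic g2 (L, 0)) (t₁ t₂ : ℝ) :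
    ∫ x in (0 : ℝ)..L, (m2 (x, t₁) * f2 (x, t₁) + n1 (x, t₁) * g1 (x, t₁)) =
      ∫ x in (0 : ℝ)..L, (m2 (x, t₂) * f2 (x, t₂) + n1 (x, t₂) * g1 (x, t₂)) := by
  have pairing_periodic := (hf1.mul hg1).add (hf2.mul hg2)
  have exchange_periodic := (hf1.mul (periodic_pT hg1)).add (hg2.mul (periodic_pT hf2))
  have flux_periodic := (pairing_periodic.mul pairing_periodic).add exchange_periodic
  refine integral_eq_of_pT_eq_pX hs.differentiable_density
    ((hs.differentiable_pairing.mul hs.differentiable_pairing).add hs.differentiable_exchange)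
    hs.pT_density_eq_pX_flux (fun t => ?_) t₁ t₂
  simpa only [Prod.mk_add_mk, zero_add, add_zero] using (flux_periodic (0, t)).symm

theorem stmt_15
    (L : ℝ) (hL : 0 < L)
    (u1 u2 v1 v2 : ℝ × ℝ → ℝ)
    (hu1 : ContDiff ℝ (⊤ : ℕ∞) u1) (hu2 : ContDiff ℝ (⊤ : ℕ∞) u2)
    (hv1 : ContDiff ℝ (⊤ : ℕ∞) v1) (hv2 : ContDiff ℝ (⊤ : ℕ∞) v2)
    (hperu1 : ∀ x t : ℝ, u1 (x + L, t) = u1 (x, t))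
    (hperu2 : ∀ x t : ℝ, u2 (x + L, t) = u2 (x, t))
    (hperv1 : ∀ x t : ℝ, v1 (x + L, t) = v1 (x, t))
    (hperv2 : ∀ x t : ℝ, v2 (x + L, t) = v2 (x, t))
    (m1 m2 n1 n2 f1 f2 g1 g2 : ℝ × ℝ → ℝ)
    (hm1 : m1 = fun p => u1 p - pX (pX u1) p)
    (hm2 : m2 = fun p => u2 p - pX (pX u2) p)
    (hn1 : n1 = fun p => v1 p - pX (pX v1) p)
    (hn2 : n2 = fun p => v2 p - pX (pX v2) p)
    (hf1 : f1 = fun p => u2 p - pX v1 p)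
    (hf2 : f2 = fun p => u1 p + pX v2 p)
    (hg1 : g1 = fun p => v2 p + pX u1 p)
    (hg2 : g2 = fun p => v1 p - pX u2 p)
    (hsys : ∀ p : ℝ × ℝ,
        pT m1 p + n2 p * g1 p * g2 p + m1 p * (f2 p * g2 p + 2 * f1 p * g1 p) = 0 ∧
        pT m2 p - n1 p * g1 p * g2 p - m2 p * (f1 p * g1 p + 2 * f2 p * g2 p) = 0 ∧
        pT n1 p - m2 p * f1 p * f2 p - n1 p * (f2 p * g2 p + 2 * f1 p * g1 p) = 0 ∧
        pT n2 p + m1 p * f1 p * f2 p + n2 p * (f1 p * g1 p + 2 * f2 p * g2 p) = 0) :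
    ∀ t1 t2 : ℝ,
      (∫ x in (0:ℝ)..L, (m2 (x, t1) * f2 (x, t1) + n1 (x, t1) * g1 (x, t1)))
        = ∫ x in (0:ℝ)..L, (m2 (x, t2) * f2 (x, t2) + n1 (x, t2) * g1 (x, t2)) := by
  have contDiff_three {w : ℝ × ℝ → ℝ} (hw : ContDiff ℝ (⊤ : ℕ∞) w) : ContDiff ℝ 3 w :=
    mod_cast contDiff_infty.mp hw 3
  have periodic_u1 := periodic_mk_zero hperu1
  have periodic_u2 := periodic_mk_zero hperu2
  have periodic_v1 := periodic_mk_zero hperv1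
  have periodic_v2 := periodic_mk_zero hperv2
  exact stmt_15_general
    (.of_potentials (contDiff_three hu1) (contDiff_three hu2) (contDiff_three hv1)
      (contDiff_three hv2) hm1 hm2 hn1 hn2 hf1 hf2 hg1 hg2
      (funext fun p => (hsys p).1) (funext fun p => (hsys p).2.1)
      (funext fun p => (hsys p).2.2.1) (funext fun p => (hsys p).2.2.2))
    (hf1 ▸ periodic_u2.sub (periodic_pX periodic_v1))
    (hf2 ▸ periodic_u1.add (periodic_pX periodic_v2))
    (hg1 ▸ periodic_v2.add (periodic_pX periodic_u1))
    (hg2 ▸ periodic_v1.sub (periodic_pX periodic_u2))
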